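/- Let H be a finite connected multigraph with at least one edge which is two-edge connected (it has no cut edge), whose edges are colored by {1,…,L}. Let GCC(H) = (𝓥,𝓔) be its graph of colored components. If GCC(H) is not a tree, then |𝓥| − |𝓔| − 1 + Σ_{S∈CC(H)} 𝔣(S)/2 − |CC(H)| ≤ −1. -/

import Mathlib

open MeasureTheory ProbabilityTheory Filter Matrix Asymptotics
open scoped BigOperators ENNReal
open scoped Classical

noncomputable section

/-- The diagonal projection `Δ` on `N × N` complex matrices. -/
def dproj {N : ℕ} (A : Matrix (Fin N) (Fin N) ℂ) : Matrix (Fin N) (Fin N) ℂ :=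
  Matrix.of fun i j => if i = j then A i j else 0

/-- The operator norm of a matrix acting on `ℓ²({1,…,N})`. -/
def matOpNorm {N : ℕ} (A : Matrix (Fin N) (Fin N) ℂ) : ℝ :=
  ‖Matrix.toEuclideanCLM (𝕜 := ℂ) A‖

/-! ### Multigraph combinatorics -/

section Graph

variable {V E : Type} (src tgt : E → V)

/-- Adjacency through an edge avoiding a forbidden set `F` of edges
(direction is ignored). -/
def adjOn (F : Set E) (a b : V) : Prop :=
  ∃ e, e ∉ F ∧ ((src e = a ∧ tgt e = b) ∨ (src e = b ∧ tgt e = a))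

/-- Reachability in the graph, using only edges outside `F`. -/
def reachOn (F : Set E) : V → V → Prop :=
  Relation.ReflTransGen (adjOn src tgt F)

lemma adjOn_symm (F : Set E) : Symmetric (adjOn src tgt F) := by
  rintro a b ⟨e, he, h⟩
  exact ⟨e, he, h.symm⟩

/-- The setoid of connectivity using edges outside `F`. -/
def connSetoid (F : Set E) : Setoid V :=
  ⟨reachOn src tgt F,
    ⟨fun _ => Relation.ReflTransGen.refl,
     fun h => (@Relation.ReflTransGen.symmetric _ _ ⟨fun _ _ h' => adjOn_symm src tgt F h'⟩).symm _ _ h,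
     fun h h' => Relation.ReflTransGen.trans h h'⟩⟩

/-- Number of connected components of the graph with the edges in `F` deleted. -/
def ncompAvoiding (F : Set E) : ℕ :=
  Nat.card (Quotient (connSetoid src tgt F))

/-- Number of connected components. -/
def ncomp : ℕ := ncompAvoiding src tgt ∅

/-- The graph is connected. -/
def IsConnectedGraph : Prop := ∀ a b : V, reachOn src tgt ∅ a b

/-- A cut edge (bridge): deleting it disconnects its endpoints. -/
def IsCutEdge (e : E) : Prop := ¬ reachOn src tgt {e} (src e) (tgt e)

/-- The set of cut edges. -/
def cutEdges : Set E := {e | IsCutEdge src tgt e}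

/-- The setoid whose classes are the two-edge connected components
(connected components after deleting all cut edges). -/
def teccSetoid : Setoid V := connSetoid src tgt (cutEdges src tgt)

/-- Degree, in the forest of two-edge connected components, of a
two-edge connected component: the number of cut edges incident to it. -/
def teccDeg (c : Quotient (teccSetoid src tgt)) : ℕ :=
  Nat.card {e : E // IsCutEdge src tgt e ∧
    (Quotient.mk (teccSetoid src tgt) (src e) = c ∨
      Quotient.mk (teccSetoid src tgt) (tgt e) = c)}

/-- `𝔣(G)`: the number of leaves of the forest of two-edge connected components,
single-vertex trees of the forest counting twice. -/
def frak : ℕ :=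
  Nat.card {c : Quotient (teccSetoid src tgt) // teccDeg src tgt c = 1} +
    2 * Nat.card {c : Quotient (teccSetoid src tgt) // teccDeg src tgt c = 0}

end Graph

/-! ### Graph monomials -/

/-- A graph monomial: a finite directed multigraph with two roots and edges
labelled by a family index in `Fin L` and an index in `K`.  (Connectedness is
required separately via `IsConnectedGraph`.) -/
structure GraphMonomial (L : ℕ) (K : Type) where
  V : Type
  E : Type
  fintV : Fintype V
  fintE : Fintype E
  src : E → V
  tgt : E → V
  vin : V
  vout : V
  labL : E → Fin L
  labK : E → K

attribute [instance] GraphMonomial.fintV GraphMonomial.fintE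

namespace GraphMonomial

variable {L : ℕ} {K : Type} (g : GraphMonomial L K)

/-- Evaluation of a graph monomial in a collection of matrices. -/
def eval {N : ℕ} (A : Fin L → K → Matrix (Fin N) (Fin N) ℂ) :
    Matrix (Fin N) (Fin N) ℂ :=
  Matrix.of fun i j => ∑ φ : g.V → Fin N,
    if φ g.vin = j ∧ φ g.vout = i then
      ∏ e : g.E, A (g.labL e) (g.labK e) (φ (g.tgt e)) (φ (g.src e))
    else 0

/-- The starting vertex of a step `(e, b)`: `e` traversed forward if `b = true`,
backward otherwise. -/
def stepSrc (s : g.E × Bool) : g.V := if s.2 then g.src s.1 else g.tgt s.1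

/-- The ending vertex of a step. -/
def stepTgt (s : g.E × Bool) : g.V := if s.2 then g.tgt s.1 else g.src s.1

/-- A simple cycle of the underlying undirected multigraph: a nonempty cyclic
sequence of steps with pairwise distinct edges and pairwise distinct vertices. -/
def IsSimpleCycle (c : List (g.E × Bool)) : Prop :=
  ∃ h : c ≠ [],
    (∀ i : Fin c.length,
      g.stepTgt (c.get i) =
        g.stepSrc (c.get ⟨((i : ℕ) + 1) % c.length,
          Nat.mod_lt _ (List.length_pos_iff.mpr h)⟩)) ∧
    (c.map Prod.fst).Nodup ∧ (c.map g.stepSrc).Nodup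

/-- A cycle is directed when it traverses all its edges consistently with
their orientations (one way or the other). -/
def IsDirectedCycleList (c : List (g.E × Bool)) : Prop :=
  (∀ s ∈ c, s.2 = true) ∨ (∀ s ∈ c, s.2 = false)

/-- `S` is the edge set of some simple cycle. -/
def IsCycleEdgeSet (S : Finset g.E) : Prop :=
  ∃ c, g.IsSimpleCycle c ∧ (c.map Prod.fst).toFinset = S

/-- The underlying graph is an oriented cactus: it is connected, every simple
cycle is directed, and every edge belongs to exactly one simple cycle. -/
def IsOrientedCactus : Prop :=
  IsConnectedGraph g.src g.tgt ∧
  (∀ c, g.IsSimpleCycle c → g.IsDirectedCycleList c) ∧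
  (∀ e : g.E, ∃! S : Finset g.E, g.IsCycleEdgeSet S ∧ e ∈ S)

/-- A cactus-type monomial: an oriented cactus whose input and output coincide. -/
def IsCactusType : Prop := g.vin = g.vout ∧ g.IsOrientedCactus

/-- A member of `ℱ`: a directed simple path (oriented from the input, at the far
right, to the output, at the far left) with oriented cacti attached to the
vertices of the path (the root of each cactus being a path vertex). -/
def IsPathCactusType : Prop :=
  IsConnectedGraph g.src g.tgt ∧
  ∃ (d : ℕ) (v : Fin (d + 1) → g.V) (f : Fin d → g.E),
    Function.Injective v ∧ Function.Injective f ∧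
    (∀ j : Fin d, g.src (f j) = v j.succ ∧ g.tgt (f j) = v j.castSucc) ∧
    g.vin = v (Fin.last d) ∧ g.vout = v 0 ∧
    (∀ c, g.IsSimpleCycle c → g.IsDirectedCycleList c ∧ ∀ s ∈ c, s.1 ∉ Set.range f) ∧
    (∀ e : g.E, e ∉ Set.range f →
      ∃! S : Finset g.E, g.IsCycleEdgeSet S ∧ e ∈ S) ∧
    (∀ w : g.V, ∃! j : Fin (d + 1), reachOn g.src g.tgt (Set.range f) w (v j))

end GraphMonomial
/-! ### The graph of colored components -/

section GCC

variable {V E : Type} (src tgt : E → V) {L : ℕ} (col : E → Fin L)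

/-- Connectivity using only edges of color `ℓ`. -/
def colorSetoid (ℓ : Fin L) : Setoid V :=
  connSetoid src tgt {e | col e ≠ ℓ}

/-- The colored components: maximal connected subgraphs all of whose edges
have one single color.  Such a component is encoded by its color together
with the corresponding class of vertices (which is required to contain at
least one edge of that color). -/
def ColoredComp : Type :=
  {p : Σ ℓ : Fin L, Quotient (colorSetoid src tgt col ℓ) //
    ∃ e, col e = p.1 ∧ Quotient.mk (colorSetoid src tgt col p.1) (src e) = p.2}

/-- Membership of a vertex in a colored component. -/
def memCC (v : V) (S : ColoredComp src tgt col) : Prop :=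
  Quotient.mk (colorSetoid src tgt col S.1.1) v = S.1.2

/-- The graph of colored components `GCC`: the undirected bipartite graph on
the colored components and the vertices, a vertex being joined to each colored
component it belongs to. -/
def gccGraph : SimpleGraph (ColoredComp src tgt col ⊕ V) where
  Adj x y :=
    (∃ S v, x = Sum.inl S ∧ y = Sum.inr v ∧ memCC src tgt col v S) ∨
    (∃ S v, x = Sum.inr v ∧ y = Sum.inl S ∧ memCC src tgt col v S)
  symm := by
    constructor
    rintro x y (⟨S, v, hx, hy, hm⟩ | ⟨S, v, hx, hy, hm⟩)
    · exact Or.inr ⟨S, v, hy, hx, hm⟩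
    · exact Or.inl ⟨S, v, hy, hx, hm⟩
  loopless := by
    constructor
    rintro x (⟨S, v, rfl, hy, hm⟩ | ⟨S, v, rfl, hy, hm⟩) <;> simp at hy

end GCC
/-! ### Colored subgraphs of a test graph -/

section ColSub

variable {V E : Type} (src tgt : E → V) {L : ℕ} (labL : E → Fin L)

/-- Source map of the union `T'_ℓ` of the colored components of color `ℓ`. -/
def colSubSrc (ℓ : Fin L) :
    {e : E // labL e = ℓ} → {v : V // ∃ e, labL e = ℓ ∧ (src e = v ∨ tgt e = v)} :=
  fun e => ⟨src e.1, e.1, e.2, Or.inl rfl⟩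

/-- Target map of the union `T'_ℓ` of the colored components of color `ℓ`. -/
def colSubTgt (ℓ : Fin L) :
    {e : E // labL e = ℓ} → {v : V // ∃ e, labL e = ℓ ∧ (src e = v ∨ tgt e = v)} :=
  fun e => ⟨tgt e.1, e.1, e.2, Or.inr rfl⟩

end ColSub
/-! ### Bridges in simple graphs -/

namespace SimpleGraph

variable {X : Type*} {G : SimpleGraph X}

/-- A vertex incident to an edge that is not a bridge is incident to a second one. -/
lemma exists_ne_adj_not_isBridge {x y : X} (hxy : G.Adj x y) (hb : ¬ G.IsBridge s(x, y)) :
    ∃ z, z ≠ y ∧ G.Adj x z ∧ ¬ G.IsBridge s(x, z) := by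
  rw [isBridge_iff_forall_cycle_notMem hxy] at hb
  push Not at hb
  obtain ⟨u, p, hp, he⟩ := hb
  have h2 := hp.ncard_neighborSet_toSubgraph_eq_two (p.fst_mem_support_of_mem_edges he)
  obtain ⟨z, hz, hzy⟩ := Set.exists_ne_of_one_lt_ncard (s := p.toSubgraph.neighborSet x) (by omega) y
  have hz' : p.toSubgraph.Adj x z := hz
  refine ⟨z, hzy, hz'.adj_sub, fun h => h.notMem_edges_of_isCycle hp ?_⟩
  rwa [← Walk.mem_edges_toSubgraph, Subgraph.mem_edgeSet]

/-- In a connected graph, every vertex other than `r` has a neighbor closer to `r`. -/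
lemma Connected.exists_adj_dist_succ (hG : G.Connected) {r x : X} (hx : x ≠ r) :
    ∃ y, G.Adj x y ∧ G.dist x r = G.dist y r + 1 := by
  obtain ⟨p, hp⟩ := hG.exists_walk_length_eq_dist x r
  cases p with
  | nil => exact absurd rfl hx
  | @cons _ y _ h q =>
    refine ⟨y, h, ?_⟩
    have h1 := dist_le q
    have h2 := hG.dist_triangle (u := x) (v := y) (w := r)
    have h3 := dist_le (Walk.cons h Walk.nil)
    simp at hp h3
    omega

/-- In a connected graph having an edge which is not a bridge, the vertices all of whose
incident edges are bridges are at most as many as the bridges. -/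
lemma Connected.card_forall_isBridge_le [Finite X] (hG : G.Connected) {a b : X}
    (hab : G.Adj a b) (hb : ¬ G.IsBridge s(a, b)) :
    Nat.card {x // ∀ y, G.Adj x y → G.IsBridge s(x, y)} ≤
      Nat.card {e // e ∈ G.edgeSet ∧ G.IsBridge e} := by
  have hne : ∀ x : {x // ∀ y, G.Adj x y → G.IsBridge s(x, y)}, x.1 ≠ a := by
    rintro ⟨x, hx⟩ rfl
    exact hb (hx _ hab)
  choose f hf hd using fun x => hG.exists_adj_dist_succ (hne x)
  refine Nat.card_le_card_of_injective
    (fun x => ⟨s(x.1, f x), hf x, x.2 _ (hf x)⟩) fun x y hxy => ?_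
  simp only [Subtype.mk.injEq, Sym2.eq_iff] at hxy
  rcases hxy with ⟨h, -⟩ | ⟨h1, h2⟩
  · exact Subtype.ext h
  · have hx := hd x
    have hy := hd y
    rw [h2] at hx
    rw [← h1] at hy
    omega

end SimpleGraph

/-! ### Incidences lying on cycles of the graph of colored components -/

section Incidence

variable {V E : Type} (src tgt : E → V) {L : ℕ} (col : E → Fin L)

instance [Finite V] : Finite (ColoredComp src tgt col) := by
  unfold ColoredComp
  infer_instance

/-- The vertices of the union of the colored components of color `ℓ`. -/
abbrev ColVert (ℓ : Fin L) : Type := {v : V // ∃ e, col e = ℓ ∧ (src e = v ∨ tgt e = v)}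

variable {src tgt col}

lemma reachOn_symm {F : Set E} {a b : V} (h : reachOn src tgt F a b) : reachOn src tgt F b a :=
  (connSetoid src tgt F).symm h

lemma gccGraph_adj_inl_inr {S : ColoredComp src tgt col} {v : V} :
    (gccGraph src tgt col).Adj (Sum.inl S) (Sum.inr v) ↔ memCC src tgt col v S := by
  simp [gccGraph]

/-- The two endpoints of an edge belong to the same colored component. -/
lemma reachOn_color_edge (e : E) :
    reachOn src tgt {e' | col e' ≠ col e} (src e) (tgt e) :=
  Relation.ReflTransGen.single ⟨e, by simp, Or.inl ⟨rfl, rfl⟩⟩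

/-- The colored component of color `ℓ` containing a given vertex. -/
def compOf {ℓ : Fin L} (w : ColVert src tgt col ℓ) : ColoredComp src tgt col :=
  ⟨⟨ℓ, Quotient.mk _ w.1⟩, by
    obtain ⟨e, rfl, h | h⟩ := w.2
    · exact ⟨e, rfl, by rw [h]⟩
    · exact ⟨e, rfl, by rw [← h]; exact Quotient.sound (reachOn_color_edge e)⟩⟩

lemma memCC_compOf_iff {ℓ : Fin L} {w : ColVert src tgt col ℓ} {v : V} :
    memCC src tgt col v (compOf w) ↔ reachOn src tgt {e | col e ≠ ℓ} v w.1 :=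
  Quotient.eq (r := colorSetoid src tgt col ℓ)

lemma memCC_compOf_self {ℓ : Fin L} (w : ColVert src tgt col ℓ) :
    memCC src tgt col w.1 (compOf w) := rfl

lemma exists_compOf_eq (S : ColoredComp src tgt col) :
    ∃ (ℓ : Fin L) (w : ColVert src tgt col ℓ), compOf w = S := by
  obtain ⟨⟨ℓ, c⟩, e, he, h⟩ := S
  exact ⟨ℓ, ⟨src e, e, he, Or.inl rfl⟩, Subtype.ext (congrArg (Sigma.mk ℓ) h)⟩

lemma compOf_eq_compOf {ℓ : Fin L} {w w' : ColVert src tgt col ℓ}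
    (h : reachOn src tgt {e | col e ≠ ℓ} w.1 w'.1) : compOf w = compOf w' :=
  Subtype.ext (by
    simp only [compOf]
    rw [Quotient.sound (s := colorSetoid src tgt col ℓ) h])

/-- Connectivity in the union of the colored components of color `ℓ` implies
connectivity through edges of color `ℓ`. -/
lemma reachOn_of_reachOn_colSub {ℓ : Fin L} {F : Set {e : E // col e = ℓ}}
    {w w' : ColVert src tgt col ℓ}
    (h : reachOn (colSubSrc src tgt col ℓ) (colSubTgt src tgt col ℓ) F w w') :
    reachOn src tgt {e | col e ≠ ℓ} w.1 w'.1 := by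
  refine Relation.ReflTransGen.lift Subtype.val ?_ _ _ h
  rintro _ _ ⟨e, -, ⟨rfl, rfl⟩ | ⟨rfl, rfl⟩⟩
  · exact ⟨e.1, by simp [e.2], Or.inl ⟨rfl, rfl⟩⟩
  · exact ⟨e.1, by simp [e.2], Or.inr ⟨rfl, rfl⟩⟩

variable (src tgt col) in
/-- The two-edge connected components of all the colored components. -/
abbrev ColTecc : Type :=
  Σ ℓ : Fin L, Quotient (teccSetoid (colSubSrc src tgt col ℓ) (colSubTgt src tgt col ℓ))

/-- The degree of a two-edge connected component in the forest of its colored component. -/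
abbrev ColTecc.deg (q : ColTecc src tgt col) : ℕ :=
  teccDeg (colSubSrc src tgt col q.1) (colSubTgt src tgt col q.1) q.2

/-- The two-edge connected component of a vertex in its colored component of color `ℓ`. -/
abbrev teccOf {ℓ : Fin L} (w : ColVert src tgt col ℓ) : ColTecc src tgt col :=
  ⟨ℓ, Quotient.mk _ w⟩

lemma compOf_eq_of_teccOf_eq {ℓ : Fin L} {w w' : ColVert src tgt col ℓ}
    (h : teccOf w = teccOf w') : compOf w = compOf w' := by
  simp only [teccOf, Sigma.mk.injEq, heq_eq_eq, true_and] at h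
  exact compOf_eq_compOf (reachOn_of_reachOn_colSub (Quotient.exact h))

/-- A colored component together with one of its vertices determines a two-edge connected
component. -/
lemma teccOf_eq_of_compOf_eq {ℓ ℓ' : Fin L} {w : ColVert src tgt col ℓ}
    {w' : ColVert src tgt col ℓ'} (hc : compOf w = compOf w') (hv : w.1 = w'.1) :
    teccOf w = teccOf w' := by
  obtain rfl : ℓ = ℓ' := congrArg (fun S => S.1.1) hc
  rw [Subtype.ext hv]

/-- The endpoints of an edge which is not a cut edge of its colored component lie in the
same two-edge connected component. -/
lemma teccOf_src_eq_teccOf_tgt {ℓ : Fin L} {e : {e : E // col e = ℓ}}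
    (he : ¬ IsCutEdge (colSubSrc src tgt col ℓ) (colSubTgt src tgt col ℓ) e) :
    teccOf (colSubSrc src tgt col ℓ e) = teccOf (colSubTgt src tgt col ℓ e) := by
  simp only [teccOf, Sigma.mk.injEq, heq_eq_eq, true_and]
  exact Quotient.sound (Relation.ReflTransGen.single ⟨e, he, Or.inl ⟨rfl, rfl⟩⟩)

/-- The endpoints of a cut edge of a colored component lie in distinct two-edge
connected components. -/
lemma teccOf_src_ne_teccOf_tgt {ℓ : Fin L} {e : {e : E // col e = ℓ}}
    (he : IsCutEdge (colSubSrc src tgt col ℓ) (colSubTgt src tgt col ℓ) e) :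
    teccOf (colSubSrc src tgt col ℓ e) ≠ teccOf (colSubTgt src tgt col ℓ e) := by
  intro h
  simp only [teccOf, Sigma.mk.injEq, heq_eq_eq, true_and] at h
  refine he (Relation.ReflTransGen.mono ?_ _ _ (Quotient.exact h))
  rintro a b ⟨g, hg, h⟩
  exact ⟨g, fun hge => hg (by rw [Set.mem_singleton_iff.1 hge]; exact he), h⟩

/-- A two-edge connected component incident to no cut edge is a full colored component. -/
lemma exists_teccOf_eq_of_deg_eq_zero [Finite E] {ℓ : Fin L} {w : ColVert src tgt col ℓ}
    (hw : (teccOf w).deg = 0) {v : V} (hv : memCC src tgt col v (compOf w)) :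
    ∃ w' : ColVert src tgt col ℓ, w'.1 = v ∧ teccOf w' = teccOf w := by
  have hcut : ∀ e : {e : E // col e = ℓ},
      (teccOf (colSubSrc src tgt col ℓ e) = teccOf w ∨
        teccOf (colSubTgt src tgt col ℓ e) = teccOf w) →
      ¬ IsCutEdge (colSubSrc src tgt col ℓ) (colSubTgt src tgt col ℓ) e := by
    intro e h hc
    simp only [teccOf, Sigma.mk.injEq, heq_eq_eq, true_and] at h
    exact (Finite.card_eq_zero_iff.1 hw).false ⟨e, hc, h⟩
  have hr := reachOn_symm (memCC_compOf_iff.1 hv)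
  induction hr with
  | refl => exact ⟨w, rfl, rfl⟩
  | @tail b c hb hbc ih =>
    obtain ⟨w', rfl, hw'⟩ := ih (memCC_compOf_iff.2 (reachOn_symm hb))
    obtain ⟨g, hg, h⟩ := hbc
    have hgl : col g = ℓ := by simpa using hg
    rcases h with ⟨h1, h2⟩ | ⟨h1, h2⟩
    · have h3 : colSubSrc src tgt col ℓ ⟨g, hgl⟩ = w' := Subtype.ext h1
      refine ⟨colSubTgt src tgt col ℓ ⟨g, hgl⟩, h2, ?_⟩
      rw [← teccOf_src_eq_teccOf_tgt (hcut _ (Or.inl (by rw [h3, hw']))), h3, hw']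
    · have h3 : colSubTgt src tgt col ℓ ⟨g, hgl⟩ = w' := Subtype.ext h2
      refine ⟨colSubSrc src tgt col ℓ ⟨g, hgl⟩, h1, ?_⟩
      rw [teccOf_src_eq_teccOf_tgt (hcut _ (Or.inr (by rw [h3, hw']))), h3, hw']

/-- A vertex `v` belongs to a colored component `S`, and the corresponding edge of the graph
of colored components is not a bridge. -/
def IsCyclicInc (S : ColoredComp src tgt col) (v : V) : Prop :=
  memCC src tgt col v S ∧ ¬ (gccGraph src tgt col).IsBridge s(Sum.inl S, Sum.inr v)

lemma IsCyclicInc.exists_ne_vertex {S : ColoredComp src tgt col} {v : V}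
    (h : IsCyclicInc S v) : ∃ u, u ≠ v ∧ IsCyclicInc S u := by
  obtain ⟨z, hz, hadj, hb⟩ :=
    SimpleGraph.exists_ne_adj_not_isBridge (gccGraph_adj_inl_inr.2 h.1) h.2
  rcases z with S' | u
  · simp [gccGraph] at hadj
  · exact ⟨u, fun hu => hz (by rw [hu]), gccGraph_adj_inl_inr.1 hadj, hb⟩

lemma IsCyclicInc.exists_ne_comp {S : ColoredComp src tgt col} {v : V}
    (h : IsCyclicInc S v) : ∃ S', S' ≠ S ∧ IsCyclicInc S' v := by
  obtain ⟨z, hz, hadj, hb⟩ :=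
    SimpleGraph.exists_ne_adj_not_isBridge (gccGraph_adj_inl_inr.2 h.1).symm
      (by rw [Sym2.eq_swap]; exact h.2)
  rcases z with S' | u
  · exact ⟨S', fun hu => hz (by rw [hu]), gccGraph_adj_inl_inr.1 hadj.symm,
      by rw [Sym2.eq_swap]; exact hb⟩
  · simp [gccGraph] at hadj

/-- A leaf of the forest of two-edge connected components of a colored component contains
a vertex whose incidence with the colored component lies on a cycle. -/
lemma exists_isCyclicInc_of_deg_eq_one (h2ec : ∀ e : E, ¬ IsCutEdge src tgt e)
    {q : ColTecc src tgt col} (hq : q.deg = 1) :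
    ∃ w : ColVert src tgt col q.1, teccOf w = q ∧ IsCyclicInc (compOf w) w.1 := by
  obtain ⟨ℓ, c⟩ := q
  obtain ⟨hsub, ⟨⟨e, hcut, hinc⟩⟩⟩ := Nat.card_eq_one_iff_unique.1 hq
  have huniq : ∀ g : {e : E // col e = ℓ},
      (teccOf (colSubSrc src tgt col ℓ g) = ⟨ℓ, c⟩ ∨
        teccOf (colSubTgt src tgt col ℓ g) = ⟨ℓ, c⟩) → g ≠ e →
      teccOf (colSubSrc src tgt col ℓ g) = teccOf (colSubTgt src tgt col ℓ g) := by
    intro g h hge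
    refine teccOf_src_eq_teccOf_tgt fun hc => hge ?_
    simp only [teccOf, Sigma.mk.injEq, heq_eq_eq, true_and] at h
    exact congrArg Subtype.val (hsub.elim ⟨g, hc, h⟩ ⟨e, hcut, hinc⟩)
  have hends : ∃ a b : ColVert src tgt col ℓ, teccOf a = ⟨ℓ, c⟩ ∧ teccOf b ≠ ⟨ℓ, c⟩ ∧
      reachOn src tgt {e.1} a.1 b.1 ∧ reachOn src tgt {e | col e ≠ ℓ} b.1 a.1 := by
    have hne := teccOf_src_ne_teccOf_tgt hcut
    have hr := not_not.1 (h2ec e.1)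
    have hc : reachOn src tgt {e | col e ≠ ℓ} (src e.1) (tgt e.1) := by
      have := reachOn_color_edge (src := src) (tgt := tgt) (col := col) e.1
      rwa [e.2] at this
    rcases hinc with h | h
    · have h' : teccOf (colSubSrc src tgt col ℓ e) = ⟨ℓ, c⟩ := congrArg (Sigma.mk ℓ) h
      exact ⟨_, _, h', fun h2 => hne (h'.trans h2.symm), hr, reachOn_symm hc⟩
    · have h' : teccOf (colSubTgt src tgt col ℓ e) = ⟨ℓ, c⟩ := congrArg (Sigma.mk ℓ) h
      exact ⟨_, _, h', fun h2 => hne (h2.trans h'.symm), reachOn_symm hr, hc⟩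
  obtain ⟨a, b, ha, hb, hab, hba⟩ := hends
  by_contra! hcon
  have hS : ∀ w : ColVert src tgt col ℓ, teccOf w = ⟨ℓ, c⟩ → compOf w = compOf a :=
    fun w hw => compOf_eq_of_teccOf_eq (hw.trans ha.symm)
  have hbridge : ∀ w : ColVert src tgt col ℓ, teccOf w = ⟨ℓ, c⟩ →
      (gccGraph src tgt col).IsBridge s(Sum.inl (compOf a), Sum.inr w.1) := by
    intro w hw
    have h := hcon w hw
    simp only [IsCyclicInc, memCC_compOf_self, true_and, not_not] at h
    rwa [hS w hw] at h
  -- the part of `H` hanging from the leaf after deleting the colored component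
  let X : V → ColVert src tgt col ℓ → Prop := fun x w => teccOf w = ⟨ℓ, c⟩ ∧
    ((gccGraph src tgt col).deleteEdges {s(Sum.inl (compOf a), Sum.inr w.1)}).Reachable
      (Sum.inr w.1) (Sum.inr x)
  have hstep : ∀ {w : ColVert src tgt col ℓ} {S x}, memCC src tgt col x S →
      (S ≠ compOf a ∨ x ≠ w.1) →
      ((gccGraph src tgt col).deleteEdges {s(Sum.inl (compOf a), Sum.inr w.1)}).Adj
        (Sum.inr x) (Sum.inl S) := by
    intro w S x hm hne
    rw [SimpleGraph.deleteEdges_adj]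
    refine ⟨(gccGraph_adj_inl_inr.2 hm).symm, ?_⟩
    simp only [Set.mem_singleton_iff, Sym2.eq_iff]
    rintro (⟨h, -⟩ | ⟨h1, h2⟩)
    · simp at h
    · exact hne.elim (fun h => h (Sum.inl_injective h2)) fun h => h (Sum.inr_injective h1)
  have hX : ∀ {x w}, X x w → memCC src tgt col x (compOf a) → x = w.1 := by
    intro x w hx hm
    by_contra hne
    exact (SimpleGraph.isBridge_iff.1 (hbridge w hx.1))
      (hx.2.trans (hstep hm (Or.inr hne)).reachable).symm
  have hclosed : ∀ x, reachOn src tgt {e.1} a.1 x → ∃ w, X x w := by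
    intro x hx
    induction hx with
    | refl => exact ⟨a, ha, SimpleGraph.Reachable.refl _⟩
    | @tail x y _ hxy ih =>
      obtain ⟨w, hw⟩ := ih
      obtain ⟨g, hg, h⟩ := hxy
      have hge : g ≠ e.1 := by simpa using hg
      set S := compOf (colSubSrc src tgt col (col g) ⟨g, rfl⟩) with hSdef
      have hs : memCC src tgt col (src g) S := memCC_compOf_self _
      have ht : memCC src tgt col (tgt g) S :=
        memCC_compOf_iff.2 (reachOn_symm (reachOn_color_edge g))
      have hmem : memCC src tgt col x S ∧ memCC src tgt col y S := by
        rcases h with ⟨rfl, rfl⟩ | ⟨rfl, rfl⟩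
        exacts [⟨hs, ht⟩, ⟨ht, hs⟩]
      by_cases hSa : S = compOf a
      · have hxw : x = w.1 := hX hw (hSa ▸ hmem.1)
        have hgl : col g = ℓ := congrArg (fun S => S.1.1) hSa
        have hne : (⟨g, hgl⟩ : {e : E // col e = ℓ}) ≠ e := fun h => hge (congrArg Subtype.val h)
        rcases h with ⟨h1, h2⟩ | ⟨h1, h2⟩
        · have h3 : colSubSrc src tgt col ℓ ⟨g, hgl⟩ = w := Subtype.ext (h1.trans hxw)
          have h4 := huniq _ (Or.inl (by rw [h3, hw.1])) hne
          refine ⟨colSubTgt src tgt col ℓ ⟨g, hgl⟩, by rw [← h4, h3, hw.1], ?_⟩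
          rw [← h2]
          exact SimpleGraph.Reachable.refl _
        · have h3 : colSubTgt src tgt col ℓ ⟨g, hgl⟩ = w := Subtype.ext (h2.trans hxw)
          have h4 := huniq _ (Or.inr (by rw [h3, hw.1])) hne
          refine ⟨colSubSrc src tgt col ℓ ⟨g, hgl⟩, by rw [h4, h3, hw.1], ?_⟩
          rw [← h1]
          exact SimpleGraph.Reachable.refl _
      · exact ⟨w, hw.1, (hw.2.trans (hstep hmem.1 (Or.inl hSa)).reachable).trans
          (hstep hmem.2 (Or.inl hSa)).reachable.symm⟩
  obtain ⟨w, hw⟩ := hclosed _ hab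
  have hbw : b = w := Subtype.ext (hX hw (memCC_compOf_iff.2 hba))
  exact hb (hbw ▸ hw.1)

/-- The graph of colored components of a connected graph having an edge is connected. -/
lemma gccGraph_connected [Nonempty E] (hconn : IsConnectedGraph src tgt) :
    (gccGraph src tgt col).Connected := by
  obtain ⟨e₀⟩ := ‹Nonempty E›
  have hV : ∀ {x y}, reachOn src tgt ∅ x y →
      (gccGraph src tgt col).Reachable (Sum.inr x) (Sum.inr y) := by
    intro x y h
    induction h with
    | refl => exact SimpleGraph.Reachable.refl _
    | @tail y z _ hyz ih =>
      obtain ⟨g, -, h⟩ := hyz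
      have hs : memCC src tgt col (src g) (compOf (colSubSrc src tgt col (col g) ⟨g, rfl⟩)) :=
        memCC_compOf_self _
      have ht : memCC src tgt col (tgt g) (compOf (colSubSrc src tgt col (col g) ⟨g, rfl⟩)) :=
        memCC_compOf_iff.2 (reachOn_symm (reachOn_color_edge g))
      have hst := (gccGraph_adj_inl_inr.2 hs).reachable.symm.trans
        (gccGraph_adj_inl_inr.2 ht).reachable
      rcases h with ⟨rfl, rfl⟩ | ⟨rfl, rfl⟩
      exacts [ih.trans hst, ih.trans hst.symm]
  rw [SimpleGraph.connected_iff_exists_forall_reachable]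
  refine ⟨Sum.inr (src e₀), ?_⟩
  rintro (S | v)
  · obtain ⟨ℓ, w, rfl⟩ := exists_compOf_eq S
    exact (hV (hconn _ w.1)).trans
      (gccGraph_adj_inl_inr.2 (memCC_compOf_self w)).reachable.symm
  · exact hV (hconn _ v)

/-! ### Counting -/

variable (src tgt col) in
/-- The number of edges of the graph of colored components that are not bridges. -/
def numCyclicInc : ℕ :=
  Nat.card {p : ColoredComp src tgt col × V // IsCyclicInc p.1 p.2}

variable (src tgt col) in
/-- The number of colored components that lie on no cycle of the graph of colored components. -/
def numAcyclicComp : ℕ :=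
  Nat.card {S : ColoredComp src tgt col // ∀ v, ¬ IsCyclicInc S v}

lemma two_mul_card_vert_le [Finite V] :
    2 * Nat.card V ≤ numCyclicInc src tgt col +
      2 * Nat.card {v : V // ∀ S : ColoredComp src tgt col, ¬ IsCyclicInc S v} := by
  have hsplit := Nat.card_congr
    (Equiv.sumCompl fun v : V => ∀ S : ColoredComp src tgt col, ¬ IsCyclicInc S v)
  rw [Nat.card_sum] at hsplit
  have htwo : ∀ v : {v : V // ¬ ∀ S : ColoredComp src tgt col, ¬ IsCyclicInc S v},
      ∃ S : Bool → ColoredComp src tgt col,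
        Function.Injective S ∧ ∀ b, IsCyclicInc (S b) v.1 := by
    rintro ⟨v, hv⟩
    push Not at hv
    obtain ⟨S, hS⟩ := hv
    obtain ⟨S', hne, hS'⟩ := hS.exists_ne_comp
    exact ⟨fun b => if b then S else S', by simp [Function.Injective, hne, hne.symm],
      by simp [hS, hS']⟩
  choose S hinj hS using htwo
  have hle : Nat.card ({v : V // ¬ ∀ S : ColoredComp src tgt col, ¬ IsCyclicInc S v} × Bool) ≤
      numCyclicInc src tgt col := by
    refine Nat.card_le_card_of_injective (fun p => ⟨(S p.1 p.2, p.1.1), hS p.1 p.2⟩) ?_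
    rintro ⟨v, b⟩ ⟨v', b'⟩ h
    simp only [Subtype.mk.injEq, Prod.mk.injEq] at h
    obtain rfl : v = v' := Subtype.ext h.2
    rw [hinj v h.1]
  rw [Nat.card_prod, Nat.card_eq_fintype_card (α := Bool), Fintype.card_bool] at hle
  omega

/-- Counting the edges of a connected graph of colored components that is not a tree. -/
lemma two_mul_card_vert_add_le [Finite V] (hG : (gccGraph src tgt col).Connected)
    (hnt : ¬ (gccGraph src tgt col).IsTree) :
    2 * Nat.card V + numCyclicInc src tgt col + 2 * numAcyclicComp src tgt col ≤
      2 * Nat.card (gccGraph src tgt col).edgeSet := by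
  set G := gccGraph src tgt col with hGdef
  have hcyc : ∃ a b, G.Adj a b ∧ ¬ G.IsBridge s(a, b) := by
    by_contra! h
    exact hnt ⟨hG, SimpleGraph.isAcyclic_iff_forall_adj_isBridge.2 fun v w => h v w⟩
  obtain ⟨a, b, hab, hb⟩ := hcyc
  have hbridge := hG.card_forall_isBridge_le hab hb
  have hsum : numAcyclicComp src tgt col +
      Nat.card {v : V // ∀ S : ColoredComp src tgt col, ¬ IsCyclicInc S v} ≤
      Nat.card {x // ∀ y, G.Adj x y → G.IsBridge s(x, y)} := by
    rw [numAcyclicComp, ← Nat.card_sum]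
    refine Nat.card_le_card_of_injective
      (Sum.elim (fun S => ⟨Sum.inl S.1, ?_⟩) (fun v => ⟨Sum.inr v.1, ?_⟩)) ?_
    · rintro (S' | v) h
      · simp [hGdef, gccGraph] at h
      · by_contra hb'
        exact S.2 v ⟨gccGraph_adj_inl_inr.1 h, hb'⟩
    · rintro (S | v') h
      · by_contra hb'
        exact v.2 S ⟨gccGraph_adj_inl_inr.1 h.symm, by rw [Sym2.eq_swap]; exact hb'⟩
      · simp [hGdef, gccGraph] at h
    · rintro (x | x) (y | y) h <;> simp at h <;> simp [Subtype.ext h]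
  have hedge : Nat.card G.edgeSet =
      Nat.card {e // e ∈ G.edgeSet ∧ G.IsBridge e} +
        Nat.card {e // e ∈ G.edgeSet ∧ ¬ G.IsBridge e} := by
    rw [← Nat.card_congr (Equiv.sumCompl fun e : G.edgeSet => G.IsBridge e.1), Nat.card_sum]
    congr 1
    · exact Nat.card_congr (Equiv.subtypeSubtypeEquivSubtypeInter _ fun e => G.IsBridge e)
    · exact Nat.card_congr (Equiv.subtypeSubtypeEquivSubtypeInter _ fun e => ¬ G.IsBridge e)
  have hinc : numCyclicInc src tgt col ≤
      Nat.card {e // e ∈ G.edgeSet ∧ ¬ G.IsBridge e} := by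
    refine Nat.card_le_card_of_injective
      (fun p => ⟨s(Sum.inl p.1.1, Sum.inr p.1.2), gccGraph_adj_inl_inr.2 p.2.1, p.2.2⟩) ?_
    rintro ⟨⟨S, v⟩, h1⟩ ⟨⟨S', v'⟩, h2⟩ h
    simpa [Sym2.eq_iff] using h
  have hV := two_mul_card_vert_le (src := src) (tgt := tgt) (col := col)
  omega

/-- The sum of the numbers `𝔣(S)` over the colored components `S`, in terms of the
two-edge connected components of the colored components. -/
lemma sum_frak_eq [Finite V] :
    ∑ ℓ : Fin L, frak (colSubSrc src tgt col ℓ) (colSubTgt src tgt col ℓ) =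
      Nat.card {q : ColTecc src tgt col // q.deg = 1} +
        2 * Nat.card {q : ColTecc src tgt col // q.deg = 0} := by
  have h : ∀ n : ℕ, Nat.card {q : ColTecc src tgt col // q.deg = n} =
      ∑ ℓ : Fin L, Nat.card {c // teccDeg (colSubSrc src tgt col ℓ)
        (colSubTgt src tgt col ℓ) c = n} := by
    intro n
    rw [← Nat.card_sigma]
    exact Nat.card_congr
      ⟨fun q => ⟨q.1.1, q.1.2, q.2⟩, fun q => ⟨⟨q.1, q.2.1⟩, q.2.2⟩, fun _ => rfl, fun _ => rfl⟩
  rw [h, h, Finset.mul_sum, ← Finset.sum_add_distrib]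
  rfl

lemma sum_frak_le [Finite V] [Finite E] (h2ec : ∀ e : E, ¬ IsCutEdge src tgt e) :
    ∑ ℓ : Fin L, frak (colSubSrc src tgt col ℓ) (colSubTgt src tgt col ℓ) ≤
      numCyclicInc src tgt col + 2 * numAcyclicComp src tgt col := by
  rw [sum_frak_eq]
  have hrep : ∀ q : ColTecc src tgt col, ∃ w : ColVert src tgt col q.1, teccOf w = q := by
    rintro ⟨ℓ, c⟩
    obtain ⟨w, rfl⟩ := Quotient.exists_rep c
    exact ⟨w, rfl⟩
  choose rep hrepq using hrep
  let P : {q : ColTecc src tgt col // q.deg = 0} → Prop :=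
    fun q => ∀ v, ¬ IsCyclicInc (compOf (rep q.1)) v
  have hsplit := Nat.card_congr (Equiv.sumCompl P)
  rw [Nat.card_sum] at hsplit
  have hacyc : Nat.card {q // P q} ≤ numAcyclicComp src tgt col := by
    refine Nat.card_le_card_of_injective (fun q => ⟨compOf (rep q.1.1), q.2⟩) ?_
    rintro ⟨⟨q, hq⟩, hP⟩ ⟨⟨q', hq'⟩, hP'⟩ h
    have hc : compOf (rep q) = compOf (rep q') := congrArg Subtype.val h
    have hm : memCC src tgt col (rep q').1 (compOf (rep q)) := hc ▸ memCC_compOf_self _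
    obtain ⟨w, hw, hwq⟩ := exists_teccOf_eq_of_deg_eq_zero (by rw [hrepq, hq]) hm
    have h2 : q = q' := by
      rw [← hrepq q, ← hwq,
        teccOf_eq_of_compOf_eq ((compOf_eq_of_teccOf_eq hwq).trans hc) hw, hrepq]
    subst h2
    rfl
  have hleaf : ∀ q : {q : ColTecc src tgt col // q.deg = 1},
      ∃ w : ColVert src tgt col q.1.1, teccOf w = q.1 ∧ IsCyclicInc (compOf w) w.1 :=
    fun q => exists_isCyclicInc_of_deg_eq_one h2ec q.2
  choose leaf hleafq hleafc using hleaf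
  have hiso : ∀ q : {q // ¬ P q}, ∃ w : Bool → ColVert src tgt col q.1.1.1,
      Function.Injective w ∧ ∀ b, teccOf (w b) = q.1.1 ∧ IsCyclicInc (compOf (w b)) (w b).1 := by
    rintro ⟨⟨q, hq⟩, hP⟩
    simp only [P] at hP
    push Not at hP
    obtain ⟨v, hv⟩ := hP
    obtain ⟨u, hne, hu⟩ := hv.exists_ne_vertex
    have hlift : ∀ x, IsCyclicInc (compOf (rep q)) x → ∃ w : ColVert src tgt col q.1,
        w.1 = x ∧ teccOf w = q ∧ IsCyclicInc (compOf w) w.1 := by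
      intro x hx
      obtain ⟨w, rfl, hwq⟩ := exists_teccOf_eq_of_deg_eq_zero (by rw [hrepq, hq]) hx.1
      exact ⟨w, rfl, hwq.trans (hrepq q), by rwa [compOf_eq_of_teccOf_eq hwq]⟩
    obtain ⟨w, rfl, hw⟩ := hlift v hv
    obtain ⟨w', rfl, hw'⟩ := hlift u hu
    have hww : w' ≠ w := fun h => hne (by rw [h])
    exact ⟨fun b => if b then w else w', by simp [Function.Injective, hww, hww.symm],
      by simp [hw, hw']⟩
  choose iso hisoinj hiso using hiso
  have hcyc : Nat.card ({q : ColTecc src tgt col // q.deg = 1} ⊕ {q // ¬ P q} × Bool) ≤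
      numCyclicInc src tgt col := by
    refine Nat.card_le_card_of_injective (Sum.elim
      (fun q => ⟨(compOf (leaf q), (leaf q).1), hleafc q⟩)
      (fun p => ⟨(compOf (iso p.1 p.2), (iso p.1 p.2).1), (hiso p.1 p.2).2⟩)) ?_
    rintro (q | ⟨q, b⟩) (q' | ⟨q', b'⟩) h <;> have h' := congrArg Subtype.val h <;>
      have ht := teccOf_eq_of_compOf_eq (congrArg Prod.fst h') (congrArg Prod.snd h')
    · rw [hleafq, hleafq] at ht
      rw [Subtype.ext ht]
    · rw [hleafq, (hiso q' b').1] at ht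
      have h1 := q.2
      rw [ht, q'.1.2] at h1
      omega
    · rw [hleafq, (hiso q b).1] at ht
      have h1 := q'.2
      rw [← ht, q.1.2] at h1
      omega
    · rw [(hiso q b).1, (hiso q' b').1] at ht
      obtain rfl : q = q' := Subtype.ext (Subtype.ext ht)
      obtain rfl : b = b' := hisoinj q (Subtype.ext (congrArg Prod.snd h'))
      rfl
  rw [Nat.card_sum, Nat.card_prod, Nat.card_eq_fintype_card (α := Bool),
    Fintype.card_bool] at hcyc
  omega

lemma card_coloredComp_le_sum_ncomp [Finite V] :
    Nat.card (ColoredComp src tgt col) ≤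
      ∑ ℓ : Fin L, ncomp (colSubSrc src tgt col ℓ) (colSubTgt src tgt col ℓ) := by
  simp only [ncomp, ncompAvoiding]
  rw [← Nat.card_sigma]
  refine Nat.card_le_card_of_surjective (fun q => Quotient.lift compOf
    (fun _ _ h => compOf_eq_compOf (reachOn_of_reachOn_colSub h)) q.2) fun S => ?_
  obtain ⟨ℓ, w, rfl⟩ := exists_compOf_eq S
  exact ⟨⟨ℓ, Quotient.mk _ w⟩, rfl⟩

end Incidence

/-- key combinatorial estimate.
For a finite connected multigraph `H` with at least one edge, no cut edge,
and edges colored by `{1, …, L}`, if the graph of colored components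
`GCC(H) = (𝓥, 𝓔)` is not a tree, then
`|𝓥| - |𝓔| - 1 + Σ_{S ∈ CC(H)} 𝔣(S)/2 - |CC(H)| ≤ -1`. -/
theorem gcc_not_tree_counting_estimate
    {V E : Type} [Fintype V] [Fintype E] [Nonempty E]
    (src tgt : E → V) {L : ℕ} (hL : 1 ≤ L) (col : E → Fin L)
    (hconn : IsConnectedGraph src tgt)
    (h2ec : ∀ e : E, ¬ IsCutEdge src tgt e)
    (hnt : ¬ (gccGraph src tgt col).IsTree) :
    (Nat.card (ColoredComp src tgt col ⊕ V) : ℝ) -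
        (Nat.card (gccGraph src tgt col).edgeSet : ℝ) - 1 +
        (∑ ℓ : Fin L,
          (frak (colSubSrc src tgt col ℓ) (colSubTgt src tgt col ℓ) : ℝ)) / 2 -
        ∑ ℓ : Fin L,
          (ncomp (colSubSrc src tgt col ℓ) (colSubTgt src tgt col ℓ) : ℝ)
      ≤ -1 := by
  have hfrak := sum_frak_le (col := col) h2ec
  have hedges := two_mul_card_vert_add_le (gccGraph_connected hconn) hnt
  have hcomp := card_coloredComp_le_sum_ncomp (src := src) (tgt := tgt) (col := col)
  have hle : (2 * Nat.card V : ℝ) +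
      ∑ ℓ : Fin L, (frak (colSubSrc src tgt col ℓ) (colSubTgt src tgt col ℓ) : ℝ) ≤
      2 * Nat.card (gccGraph src tgt col).edgeSet := by
    exact_mod_cast (by omega : 2 * Nat.card V +
      ∑ ℓ : Fin L, frak (colSubSrc src tgt col ℓ) (colSubTgt src tgt col ℓ) ≤
      2 * Nat.card (gccGraph src tgt col).edgeSet)
  have hcomp' : (Nat.card (ColoredComp src tgt col) : ℝ) ≤
      ∑ ℓ : Fin L, (ncomp (colSubSrc src tgt col ℓ) (colSubTgt src tgt col ℓ) : ℝ) := by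
    exact_mod_cast hcomp
  rw [Nat.card_sum, Nat.cast_add]
  linarith
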